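/- Let (M,g,J) be a nearly Kähler manifold with special algebraic torsion TM = V ⊕ H (ξ_V V = 0, ξ_H H = V, both distributions J-stable and ∇^{U(n)}-parallel). If r has a single eigenvalue k on H and eigenvalue l on V, then 2 l dim V = k dim H. More generally, if H = E ⊕ F with ξ_E E = ξ_F F = 0, ξ_E F = V, ξ_V E = F, ξ_V F = E, and r has eigenvalues l, k, m on V, E, F respectively, then l dim V = k dim E = m dim F. -/

import Mathlib

open scoped RealInnerProductSpace

theorem aux_trace {W : Type*} [NormedAddCommGroup W] [InnerProductSpace ℝ W]
    [FiniteDimensional ℝ W] {ι : Type*} [Fintype ι] (u : ι → W) (hu : Orthonormal ℝ u)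
    (hs : ⊤ ≤ Submodule.span ℝ (Set.range u)) (A : W →ₗ[ℝ] W)
    (hA : ∀ Y Z, ⟪A Y, Z⟫ = -⟪Y, A Z⟫) :
    -4 * LinearMap.trace ℝ W (A ∘ₗ A) = 4 * ∑ i, ∑ j, ⟪A (u i), u j⟫ ^ 2 := by
  classical
  let b := OrthonormalBasis.mk hu hs
  have hb : ∀ i, b i = u i := fun i => by simp [b]
  rw [LinearMap.trace_eq_sum_inner _ b]
  have : ∀ i, ⟪b i, (A ∘ₗ A) (b i)⟫ = -∑ j, ⟪A (u i), u j⟫ ^ 2 := by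
    intro i
    have h1 := hA (b i) (A (b i))
    have h2 := b.sum_inner_mul_inner (A (b i)) (A (b i))
    rw [LinearMap.comp_apply, ← neg_eq_iff_eq_neg, ← h1, ← h2]
    refine Finset.sum_congr rfl fun j _ => ?_
    rw [real_inner_comm (A (b i)) (b j), hb, hb, sq]
  simp only [this, Finset.sum_neg_distrib]
  ring

theorem aux_sum {W : Type*} [NormedAddCommGroup W] [InnerProductSpace ℝ W]
    {ι κ : Type*} (u : ι → W) (w : κ → W) (A B : Submodule ℝ W)
    (hu : Orthonormal ℝ u) (hw : Orthonormal ℝ w)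
    (hA : Submodule.span ℝ (Set.range u) = A) (hB : Submodule.span ℝ (Set.range w) = B)
    (h : ∀ x ∈ A, ∀ y ∈ B, ⟪x, y⟫ = 0) :
    Orthonormal ℝ (Sum.elim u w) ∧
      Submodule.span ℝ (Set.range (Sum.elim u w)) = A ⊔ B := by
  have h' : ∀ i j, ⟪u i, w j⟫ = 0 := fun i j => h _
    (hA ▸ Submodule.subset_span ⟨i, rfl⟩) _ (hB ▸ Submodule.subset_span ⟨j, rfl⟩)
  refine ⟨⟨?_, ?_⟩, ?_⟩
  · rintro (i | i)
    · exact hu.1 i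
    · exact hw.1 i
  · rintro (i | i) (j | j) hij
    · exact hu.2 (fun e => hij (e ▸ rfl))
    · exact h' i j
    · exact (real_inner_comm _ _).trans (h' j i)
    · exact hw.2 (fun e => hij (e ▸ rfl))
  · rw [Set.Sum.elim_range, Submodule.span_union, hA, hB]

theorem aux_basis {W : Type*} [NormedAddCommGroup W] [InnerProductSpace ℝ W]
    [FiniteDimensional ℝ W] (A : Submodule ℝ W) :
    ∃ u : Fin (Module.finrank ℝ A) → W, Orthonormal ℝ u ∧
      Submodule.span ℝ (Set.range u) = A ∧ ∀ i, u i ∈ A := by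
  let b := stdOrthonormalBasis ℝ A
  refine ⟨fun i => (b i : W), ?_, ?_, fun i => (b i).2⟩
  · exact b.orthonormal.comp_linearIsometry A.subtypeₗᵢ
  · have := b.toBasis.span_eq
    have h2 := congrArg (Submodule.map A.subtype) this
    rw [Submodule.map_span, ← Set.range_comp, Submodule.map_top, Submodule.range_subtype] at h2
    refine Eq.trans ?_ h2
    congr 2

theorem aux_eig {W : Type*} [NormedAddCommGroup W] [InnerProductSpace ℝ W]
    {n : ℕ} (u : Fin n → W) (hu : Orthonormal ℝ u) (r : W → W → ℝ) (A : Submodule ℝ W)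
    (hA : ∀ i, u i ∈ A) (l : ℝ) (h : ∀ v ∈ A, ∀ w ∈ A, r v w = l * ⟪v, w⟫) :
    l * (n : ℝ) = ∑ i, r (u i) (u i) := by
  have : ∀ i, r (u i) (u i) = l := fun i => by
    rw [h _ (hA i) _ (hA i), real_inner_self_eq_norm_sq, hu.1 i]; simp
  simp [this, mul_comm]

/-- Fiberwise formulation of the dimension relations for a
nearly Kähler manifold with special algebraic torsion `TM = V ⊕ H`
(`ξ_V V = 0`, `ξ_H H = V`, both `J`-stable and parallel), where
`r(X,Y) = -4 trace (ξ_X ∘ ξ_Y)`.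
(1) If `r` has the single eigenvalue `k` on `H` and eigenvalue `l` on `V`, then
`2 l dim V = k dim H`.  (2) More generally, if `H = E ⊕ F` with
`ξ_E E = ξ_F F = 0`, `ξ_E F = V`, `ξ_V E = F`, `ξ_V F = E`, and `r` has
eigenvalues `l, k, m` on `V, E, F` respectively, then
`l dim V = k dim E = m dim F`. -/
theorem stmt5
    {W : Type*} [NormedAddCommGroup W] [InnerProductSpace ℝ W]
    [FiniteDimensional ℝ W]
    (J : W →ₗ[ℝ] W)
    (hJ2 : ∀ x, J (J x) = -x)
    (hJg : ∀ x y, ⟪J x, J y⟫ = ⟪x, y⟫)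
    (ξ : W →ₗ[ℝ] W →ₗ[ℝ] W)
    (hξskew : ∀ X Y Z, ⟪ξ X Y, Z⟫ = -⟪Y, ξ X Z⟫)
    (hξalt : ∀ X Y, ξ X Y = - ξ Y X)
    (hξJ : ∀ X Y, ξ X (J Y) + J (ξ X Y) = 0)
    (r : W → W → ℝ)
    (hr : ∀ X Y, r X Y = -4 * LinearMap.trace ℝ W (ξ X ∘ₗ ξ Y))
    (V H : Submodule ℝ W)
    (hsplit : V ⊔ H = ⊤)
    (horth : ∀ v ∈ V, ∀ x ∈ H, ⟪v, x⟫ = 0)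
    (hJV : ∀ v ∈ V, J v ∈ V) (hJH : ∀ x ∈ H, J x ∈ H)
    (hξVV : ∀ v ∈ V, ∀ w ∈ V, ξ v w = 0)
    (hξHH : ∀ x ∈ H, ∀ y ∈ H, ξ x y ∈ V)
    (hξHHspan : V ≤ Submodule.span ℝ {z | ∃ x ∈ H, ∃ y ∈ H, z = ξ x y}) :
    -- (1) single eigenvalue on H :
    (∀ l k : ℝ,
      (∀ v ∈ V, ∀ w ∈ V, r v w = l * ⟪v, w⟫) →
      (∀ x ∈ H, ∀ y ∈ H, r x y = k * ⟪x, y⟫) →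
      2 * l * (Module.finrank ℝ V : ℝ) = k * (Module.finrank ℝ H : ℝ)) ∧
    -- (2) the splitting H = E ⊕ F :
    (∀ E F : Submodule ℝ W, ∀ l k m : ℝ,
      E ⊔ F = H →
      (∀ x ∈ E, ∀ y ∈ F, ⟪x, y⟫ = 0) →
      (∀ x ∈ E, J x ∈ E) → (∀ y ∈ F, J y ∈ F) →
      (∀ x ∈ E, ∀ y ∈ E, ξ x y = 0) →
      (∀ x ∈ F, ∀ y ∈ F, ξ x y = 0) →
      (∀ x ∈ E, ∀ y ∈ F, ξ x y ∈ V) →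
      (∀ v ∈ V, ∀ x ∈ E, ξ v x ∈ F) →
      (∀ v ∈ V, ∀ y ∈ F, ξ v y ∈ E) →
      (∀ v ∈ V, ∀ w ∈ V, r v w = l * ⟪v, w⟫) →
      (∀ x ∈ E, ∀ y ∈ E, r x y = k * ⟪x, y⟫) →
      (∀ x ∈ F, ∀ y ∈ F, r x y = m * ⟪x, y⟫) →
      l * (Module.finrank ℝ V : ℝ) = k * (Module.finrank ℝ E : ℝ) ∧
      k * (Module.finrank ℝ E : ℝ) = m * (Module.finrank ℝ F : ℝ)) := by
  have s12 : ∀ X Y Z, ⟪ξ X Y, Z⟫ ^ 2 = ⟪ξ Y X, Z⟫ ^ 2 := fun X Y Z => by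
    rw [hξalt X Y, inner_neg_left]; ring
  have s23 : ∀ X Y Z, ⟪ξ X Y, Z⟫ ^ 2 = ⟪ξ X Z, Y⟫ ^ 2 := fun X Y Z => by
    rw [hξskew X Y Z, real_inner_comm]; ring
  obtain ⟨v, hv, hvs, hvm⟩ := aux_basis V
  refine ⟨?_, ?_⟩
  · intro l k hl hk
    obtain ⟨x, hx, hxs, hxm⟩ := aux_basis H
    obtain ⟨ho, hs⟩ := aux_sum v x V H hv hx hvs hxs horth
    rw [hsplit] at hs
    have key : ∀ X, r X X = _ := fun X =>
      (hr X X).trans (aux_trace _ ho hs.ge (ξ X) (hξskew X))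
    have e1 := aux_eig v hv r V hvm l hl
    have e2 := aux_eig x hx r H hxm k hk
    simp only [key, Fintype.sum_sum_type, Sum.elim_inl, Sum.elim_inr] at e1 e2
    have z1 : ∀ i j Z, ⟪ξ (v i) (v j), Z⟫ ^ 2 = 0 := fun i j Z => by
      rw [hξVV _ (hvm i) _ (hvm j)]; simp
    have z2 : ∀ i j Z, ⟪ξ (v i) Z, v j⟫ ^ 2 = 0 := fun i j Z => by rw [s23, z1]
    have z3 : ∀ i j Z, ⟪ξ Z (v i), v j⟫ ^ 2 = 0 := fun i j Z => by rw [s12, z2]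
    have z4 : ∀ a b c, ⟪ξ (x a) (x b), x c⟫ ^ 2 = 0 := fun a b c => by
      rw [horth _ (hξHH _ (hxm a) _ (hxm b)) _ (hxm c)]; simp
    simp only [z1, z2, z3, z4, Finset.sum_const_zero, add_zero, zero_add] at e1 e2
    simp only [← Finset.mul_sum, Finset.sum_add_distrib] at e1 e2
    have t1 : ∑ a, ∑ i, ∑ b, ⟪ξ (x a) (v i), x b⟫ ^ 2
        = ∑ i, ∑ a, ∑ b, ⟪ξ (v i) (x a), x b⟫ ^ 2 := by
      rw [Finset.sum_comm]; simp only [s12 (x _) (v _)]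
    have t2 : ∑ a, ∑ b, ∑ i, ⟪ξ (x a) (x b), v i⟫ ^ 2
        = ∑ a, ∑ i, ∑ b, ⟪ξ (x a) (v i), x b⟫ ^ 2 := by
      refine Finset.sum_congr rfl fun a _ => ?_
      rw [Finset.sum_comm]; simp only [s23 (x _) (x _) (v _)]
    rw [t2, t1] at e2
    linarith
  · intro E F l k m hEF hEFo _ _ hEE hFF _ _ _ hl hk hm
    obtain ⟨x, hx, hxs, hxm⟩ := aux_basis E
    obtain ⟨y, hy, hys, hym⟩ := aux_basis F
    obtain ⟨ho', hs'⟩ := aux_sum x y E F hx hy hxs hys hEFo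
    rw [hEF] at hs'
    obtain ⟨ho, hs⟩ := aux_sum v _ V H hv ho' hvs hs' horth
    rw [hsplit] at hs
    have key : ∀ X, r X X = _ := fun X =>
      (hr X X).trans (aux_trace _ ho hs.ge (ξ X) (hξskew X))
    have e1 := aux_eig v hv r V hvm l hl
    have e2 := aux_eig x hx r E hxm k hk
    have e3 := aux_eig y hy r F hym m hm
    simp only [key, Fintype.sum_sum_type, Sum.elim_inl, Sum.elim_inr] at e1 e2 e3
    have z1 : ∀ i j Z, ⟪ξ (v i) (v j), Z⟫ ^ 2 = 0 := fun i j Z => by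
      rw [hξVV _ (hvm i) _ (hvm j)]; simp
    have z2 : ∀ i j Z, ⟪ξ (v i) Z, v j⟫ ^ 2 = 0 := fun i j Z => by rw [s23, z1]
    have z3 : ∀ i j Z, ⟪ξ Z (v i), v j⟫ ^ 2 = 0 := fun i j Z => by rw [s12, z2]
    have z4 : ∀ i j Z, ⟪ξ (x i) (x j), Z⟫ ^ 2 = 0 := fun i j Z => by
      rw [hEE _ (hxm i) _ (hxm j)]; simp
    have z5 : ∀ i j Z, ⟪ξ (x i) Z, x j⟫ ^ 2 = 0 := fun i j Z => by rw [s23, z4]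
    have z6 : ∀ i j Z, ⟪ξ Z (x i), x j⟫ ^ 2 = 0 := fun i j Z => by rw [s12, z5]
    have z7 : ∀ i j Z, ⟪ξ (y i) (y j), Z⟫ ^ 2 = 0 := fun i j Z => by
      rw [hFF _ (hym i) _ (hym j)]; simp
    have z8 : ∀ i j Z, ⟪ξ (y i) Z, y j⟫ ^ 2 = 0 := fun i j Z => by rw [s23, z7]
    have z9 : ∀ i j Z, ⟪ξ Z (y i), y j⟫ ^ 2 = 0 := fun i j Z => by rw [s12, z8]
    simp only [z1, z2, z3, z4, z5, z6, z7, z8, z9, Finset.sum_const_zero, add_zero,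
      zero_add] at e1 e2 e3
    simp only [← Finset.mul_sum, Finset.sum_add_distrib] at e1 e2 e3
    have g : ∀ {a b c : ℕ} (p : Fin a → W) (q : Fin b → W) (s : Fin c → W),
        ∑ i, ∑ j, ∑ k, ⟪ξ (p i) (q j), s k⟫ ^ 2
          = ∑ j, ∑ i, ∑ k, ⟪ξ (q j) (p i), s k⟫ ^ 2 := fun p q s => by
      rw [Finset.sum_comm]; simp only [s12 (p _) (q _)]
    have g' : ∀ {a b c : ℕ} (p : Fin a → W) (q : Fin b → W) (s : Fin c → W),
        ∑ i, ∑ j, ∑ k, ⟪ξ (p i) (q j), s k⟫ ^ 2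
          = ∑ i, ∑ k, ∑ j, ⟪ξ (p i) (s k), q j⟫ ^ 2 := fun p q s => by
      refine Finset.sum_congr rfl fun a _ => ?_
      rw [Finset.sum_comm]; simp only [s23 (p _) (q _) (s _)]
    have a1 := g' v y x
    have a2 := g x v y
    have a3 := g' x y v
    have a4 := g y v x
    have a5 := g' y x v
    constructor <;> linarith
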